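/- Let d_C ≥ 1 and d₁, d₂ ≥ 1 with d₁·d₂ ≥ 2. Let ψ be a complex positive semidefinite matrix of trace 1 acting on ℂ^{d_C} ⊗ ℂ^{d₁} ⊗ ℂ^{d₂}, and let ψ_C denote its partial trace over the second and third factors. Equip the unitary group U(d₁d₂) with its Haar probability measure, and for U ∈ U(d₁d₂) define σ(U)^{CA₂} := Tr_{A₁}[(1_{d_C} ⊗ U) ψ (1_{d_C} ⊗ U)*], the partial trace of the conjugated state over the middle factor ℂ^{d₁}. Then ∫_{U(d₁d₂)} Tr[(σ(U)^{CA₂} − ψ_C ⊗ (1/d₂)·1_{d₂})²] dU = (d₂² − 1)·(d₁d₂·Tr(ψ²) − Tr(ψ_C²)) / (d₂·((d₁d₂)² − 1)). -/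

import Mathlib

open MeasureTheory Matrix Kronecker
open scoped ComplexOrder

/-- The state of the reference `C` and the remaining black hole `A₂` after the black hole
dynamics `U`: partial trace over the emitted radiation `A₁` of `(1 ⊗ U) ψ (1 ⊗ U)*`. -/
noncomputable def sigmaCA2 {dC d₁ d₂ : ℕ}
    (ψ : Matrix (Fin dC × (Fin d₁ × Fin d₂)) (Fin dC × (Fin d₁ × Fin d₂)) ℂ)
    (U : Matrix.unitaryGroup (Fin d₁ × Fin d₂) ℂ) :
    Matrix (Fin dC × Fin d₂) (Fin dC × Fin d₂) ℂ :=
  Matrix.of fun p q => ∑ a₁ : Fin d₁,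
    (((1 : Matrix (Fin dC) (Fin dC) ℂ) ⊗ₖ (U : Matrix (Fin d₁ × Fin d₂) (Fin d₁ × Fin d₂) ℂ))
        * ψ *
      ((1 : Matrix (Fin dC) (Fin dC) ℂ) ⊗ₖ (U : Matrix (Fin d₁ × Fin d₂) (Fin d₁ × Fin d₂) ℂ))ᴴ)
      (p.1, (a₁, p.2)) (q.1, (a₁, q.2))

/-- Partial trace over the second and third tensor factors. -/
noncomputable def ptraceC {dC d₁ d₂ : ℕ}
    (ψ : Matrix (Fin dC × (Fin d₁ × Fin d₂)) (Fin dC × (Fin d₁ × Fin d₂)) ℂ) :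
    Matrix (Fin dC) (Fin dC) ℂ :=
  Matrix.of fun c c' => ∑ a : Fin d₁ × Fin d₂, ψ (c, a) (c', a)

/-!
The purity of the reduced state is linear in two copies of `ψ`: it equals
`Tr[S (U ⊗ U) X (U ⊗ U)*]`, where `S` exchanges the two copies of `A₂` and `X` is the contraction
of `ψ ⊗ ψ` over the two copies of `C`. The Haar average of `(U ⊗ U) X (U ⊗ U)*` commutes with
every `V ⊗ V`, so it is a combination `α + β F` of the identity and the swap `F` of the two copies
of `A₁ ⊗ A₂`. The coefficients are determined by the conserved quantities `Tr X = Tr ψ_C²` and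
`Tr F X = Tr ψ²`, and `Tr S = d₁² d₂`, `Tr S F = d₁ d₂²`. Since `Tr_{A₂} σ(U) = ψ_C`, the cross
terms in the squared distance only subtract `Tr ψ_C² / d₂`.
-/

section SwapMatrix

variable {m n R : Type*}

variable (n R) in
/-- The operator on the tensor square of `R^n` exchanging the two tensor factors. -/
def swapMatrix [DecidableEq n] [Zero R] [One R] : Matrix (n × n) (n × n) R :=
  Equiv.Perm.permMatrix R (Equiv.prodComm n n)

variable (m n R) in
/-- The operator on the tensor square of `R^m ⊗ R^n` exchanging the two copies of `R^n` only. -/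
def swapSndMatrix [DecidableEq m] [DecidableEq n] [Zero R] [One R] :
    Matrix ((m × n) × (m × n)) ((m × n) × (m × n)) R :=
  Equiv.Perm.permMatrix R
    { toFun x := ((x.1.1, x.2.2), (x.2.1, x.1.2))
      invFun x := ((x.1.1, x.2.2), (x.2.1, x.1.2)) }

/-- The partial trace over the first tensor factor. -/
def traceFst [Fintype m] [AddCommMonoid R] (M : Matrix (m × n) (m × n) R) : Matrix n n R :=
  of fun i j => ∑ a, M (a, i) (a, j)

lemma swapMatrix_apply [DecidableEq n] [Zero R] [One R] (i j k l : n) :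
    swapMatrix n R (i, j) (k, l) = if i = l ∧ j = k then 1 else 0 := by
  simp [swapMatrix, PEquiv.toMatrix_apply, and_comm]

lemma traceFst_one [Fintype m] [DecidableEq m] [DecidableEq n] [NonAssocSemiring R] :
    traceFst (1 : Matrix (m × n) (m × n) R) = (Fintype.card m : R) • 1 := by
  ext i j
  simp [traceFst, one_apply]

variable [Fintype m] [Fintype n] [DecidableEq m] [DecidableEq n]

lemma trace_permMatrix_mul [NonAssocSemiring R] (σ : Equiv.Perm n) (M : Matrix n n R) :
    (σ.permMatrix R * M).trace = ∑ i, M (σ i) i := by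
  simp [PEquiv.toMatrix_toPEquiv_mul, trace]

lemma swapMatrix_mul_self [NonAssocSemiring R] : swapMatrix n R * swapMatrix n R = 1 := by
  rw [swapMatrix, ← permMatrix_mul]
  exact permMatrix_one

variable [CommSemiring R]

lemma trace_swapMatrix_mul_kronecker (A B : Matrix n n R) :
    (swapMatrix n R * (A ⊗ₖ B)).trace = (A * B).trace := by
  rw [swapMatrix, trace_permMatrix_mul, Fintype.sum_prod_type, Finset.sum_comm]
  rfl

lemma trace_swapSndMatrix_mul (M : Matrix ((m × n) × (m × n)) ((m × n) × (m × n)) R) :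
    (swapSndMatrix m n R * M).trace =
      ∑ i, ∑ j, ∑ a, ∑ b, M ((a, i), (b, j)) ((a, j), (b, i)) := by
  simp only [swapSndMatrix, trace_permMatrix_mul, Fintype.sum_prod_type, Equiv.coe_fn_mk]
  rw [Finset.sum_comm]
  exact (Fintype.sum_congr _ _ fun _ => Finset.sum_comm_cycle).trans Finset.sum_comm

lemma trace_swapSndMatrix_mul_kronecker (A B : Matrix (m × n) (m × n) R) :
    (swapSndMatrix m n R * (A ⊗ₖ B)).trace = (traceFst A * traceFst B).trace := by
  rw [trace_swapSndMatrix_mul]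
  simp only [kroneckerMap_apply, trace, diag, mul_apply, traceFst,
    of_apply, Finset.sum_mul_sum]

lemma trace_swapMatrix : (swapMatrix n R).trace = Fintype.card n := by
  simpa using trace_swapMatrix_mul_kronecker (1 : Matrix n n R) 1

lemma trace_swapSndMatrix :
    (swapSndMatrix m n R).trace = (Fintype.card m : R) ^ 2 * Fintype.card n := by
  simpa [traceFst_one, sq, mul_assoc] using
    trace_swapSndMatrix_mul_kronecker (1 : Matrix (m × n) (m × n) R) 1

lemma trace_swapSndMatrix_mul_swapMatrix :
    (swapSndMatrix m n R * swapMatrix (m × n) R).trace =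
      Fintype.card m * (Fintype.card n : R) ^ 2 := by
  simp only [trace_swapSndMatrix_mul, swapMatrix_apply, Prod.mk.injEq, and_true, ite_and,
    Finset.sum_ite_eq, Finset.mem_univ, if_true, Finset.sum_const, Finset.card_univ, nsmul_eq_mul,
    mul_one]
  ring

lemma commute_kronecker_self_swapMatrix (A : Matrix n n R) :
    Commute (A ⊗ₖ A) (swapMatrix n R) := by
  ext ⟨i, j⟩ ⟨k, l⟩
  simp [mul_apply, swapMatrix_apply, Fintype.sum_prod_type, ite_and, mul_comm]

end SwapMatrix

section Commutant

variable {n : Type*} [Fintype n] [DecidableEq n]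

lemma permMatrix_mem_unitaryGroup (σ : Equiv.Perm n) : σ.permMatrix ℂ ∈ unitaryGroup n ℂ := by
  rw [mem_unitaryGroup_iff, star_eq_conjTranspose, conjTranspose_permMatrix, ← permMatrix_mul,
    inv_mul_cancel, permMatrix_one]

lemma smul_one_add_smul_mem_unitaryGroup {S : Matrix n n ℂ} (hS : IsSelfAdjoint S)
    (hSS : S * S = 1) {a b : ℂ} (hnorm : a * star a + b * star b = 1)
    (horth : a * star b + b * star a = 0) : a • 1 + b • S ∈ unitaryGroup n ℂ := by
  rw [mem_unitaryGroup_iff, star_add, star_smul, star_smul, star_one, hS.star_eq, add_mul, mul_add,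
    mul_add]
  simp only [smul_mul_smul_comm, hSS, one_mul, mul_one]
  linear_combination (norm := module) hnorm • (1 : Matrix n n ℂ) + horth • S

lemma smul_one_add_smul_kronecker_self {n R : Type*} [DecidableEq n] [CommRing R]
    (S : Matrix n n R) (a b : R) :
    (a • 1 + b • S) ⊗ₖ (a • 1 + b • S) =
      (a * a) • 1 + (a * b) • (S ⊗ₖ 1 + 1 ⊗ₖ S) + (b * b) • (S ⊗ₖ S) := by
  simp only [add_kronecker, kronecker_add, smul_kronecker, kronecker_smul, one_kronecker_one]
  module

variable {M : Matrix (n × n) (n × n) ℂ} (hM : ∀ V ∈ unitaryGroup n ℂ, Commute (V ⊗ₖ V) M)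
include hM

lemma apply_perm_of_commute_kronecker_self (σ : Equiv.Perm n) (i j k l : n) :
    M (σ i, σ j) (σ k, σ l) = M (i, j) (k, l) := by
  have h := congrFun₂ (hM _ (permMatrix_mem_unitaryGroup σ)) (i, j) (σ k, σ l)
  simpa [mul_apply, PEquiv.toMatrix_apply, Fintype.sum_prod_type] using h

lemma commute_kronecker_one_add_one_kronecker {S : Matrix n n ℂ} (hS : IsSelfAdjoint S)
    (hSS : S * S = 1) : Commute (S ⊗ₖ 1 + 1 ⊗ₖ S) M := by
  -- For `a` real and `b` imaginary with `|a|² + |b|² = 1`, the matrix `W = a + b S` is unitary, and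
  -- `S ⊗ 1 + 1 ⊗ S` is the cross term of `W ⊗ W`.
  have hS' : S ∈ unitaryGroup n ℂ := by rwa [mem_unitaryGroup_iff, hS.star_eq]
  let a : ℂ := 3 / 5
  let b : ℂ := 4 / 5 * Complex.I
  have ha : star a = a := by simp [a]
  have hb : star b = -b := by simp [b]
  have hnorm : a * star a + b * star b = 1 := by
    rw [ha, hb]
    linear_combination -(16 / 25 : ℂ) * Complex.I_mul_I
  have horth : a * star b + b * star a = 0 := by
    rw [ha, hb]
    ring
  have hW := hM _ (smul_one_add_smul_mem_unitaryGroup hS hSS hnorm horth)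
  rw [smul_one_add_smul_kronecker_self] at hW
  have hsum : Commute ((a * b) • (S ⊗ₖ 1 + 1 ⊗ₖ S)) M := by
    simpa using (hW.sub_left ((hM S hS').smul_left (b * b))).sub_left
      ((Commute.one_left M).smul_left (a * a))
  exact (Commute.smul_left_iff₀ (by simp [a, b])).mp hsum

lemma apply_eq_zero_of_commute_kronecker_self {i j k l : n} (h : s(i, j) ≠ s(k, l)) :
    M (i, j) (k, l) = 0 := by
  -- For the reflection `s` negating the basis vector `m`, the matrix `s ⊗ 1 + 1 ⊗ s` is diagonal,
  -- so `M` can only connect pairs in which `m` occurs equally often.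
  have hsign (m : n) :
      ((if i = m then -1 else 1) + (if j = m then -1 else 1)) * M (i, j) (k, l) =
        M (i, j) (k, l) * ((if k = m then -1 else 1) + (if l = m then -1 else 1)) := by
    let s : n → ℂ := fun x => if x = m then -1 else 1
    have hs : IsSelfAdjoint (diagonal s) := by
      simp [IsSelfAdjoint, star_eq_conjTranspose, s, apply_ite star]
    have hss : diagonal s * diagonal s = 1 := by
      rw [diagonal_mul_diagonal, ← diagonal_one]
      congr! with x
      grind
    have hD := congrFun₂ (commute_kronecker_one_add_one_kronecker hM hs hss) (i, j) (k, l)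
    simpa [s, add_mul, mul_add, ← diagonal_one, diagonal_kronecker_diagonal] using hD
  have hi := hsign i
  have hj := hsign j
  rw [Ne, Sym2.eq_iff] at h
  grind

lemma apply_diag_eq_add_of_commute_kronecker_self {p q : n} (hpq : p ≠ q) :
    M (p, p) (p, p) = M (p, q) (p, q) + M (q, p) (p, q) := by
  have hS := commute_kronecker_one_add_one_kronecker hM (conjTranspose_swap p q)
    (swap_mul_self p q)
  have h := congrFun₂ hS (p, p) (p, q)
  have hzero : M (p, p) (q, q) = 0 := apply_eq_zero_of_commute_kronecker_self hM (by simp [hpq])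
  have hsum : M (q, p) (p, q) + M (p, q) (p, q) = M (p, p) (q, q) + M (p, p) (p, p) := by
    simpa [mul_apply, swap, PEquiv.toMatrix_apply, one_apply, Fintype.sum_prod_type,
      add_mul, mul_add, Finset.sum_add_distrib, Equiv.swap_apply_eq_iff] using h
  linear_combination -hsum - hzero

lemma exists_eq_smul_one_add_smul_swapMatrix_of_commute :
    ∃ α β : ℂ, M = α • 1 + β • swapMatrix n ℂ := by
  rcases subsingleton_or_nontrivial n with _ | _
  · rcases isEmpty_or_nonempty n with _ | ⟨⟨p⟩⟩
    · exact ⟨0, 0, Subsingleton.elim _ _⟩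
    · refine ⟨M (p, p) (p, p), 0, ?_⟩
      ext ⟨i, j⟩ ⟨k, l⟩
      simp [Subsingleton.elim _ p, one_apply]
  obtain ⟨p, q, hpq⟩ := exists_pair_ne n
  have hdirect {i j : n} (hij : i ≠ j) : M (i, j) (i, j) = M (p, q) (p, q) := by
    obtain ⟨σ, rfl, rfl⟩ := MulAction.is_two_pretransitive_iff.mp
      (Equiv.Perm.isMultiplyPretransitive n 2) hpq hij
    exact apply_perm_of_commute_kronecker_self hM σ p q p q
  have hexchange {i j : n} (hij : i ≠ j) : M (i, j) (j, i) = M (p, q) (q, p) := by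
    obtain ⟨σ, rfl, rfl⟩ := MulAction.is_two_pretransitive_iff.mp
      (Equiv.Perm.isMultiplyPretransitive n 2) hpq hij
    exact apply_perm_of_commute_kronecker_self hM σ p q q p
  have hself (i : n) : M (i, i) (i, i) = M (p, q) (p, q) + M (p, q) (q, p) := by
    obtain ⟨j, hji⟩ := exists_ne i
    rw [apply_diag_eq_add_of_commute_kronecker_self hM hji.symm, hdirect hji.symm, hexchange hji]
  refine ⟨M (p, q) (p, q), M (p, q) (q, p), ?_⟩
  ext ⟨i, j⟩ ⟨k, l⟩
  simp only [Matrix.add_apply, Matrix.smul_apply, one_apply, swapMatrix_apply,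
    smul_eq_mul, Prod.mk.injEq]
  by_cases h : s(i, j) = s(k, l)
  · rcases Sym2.eq_iff.mp h with ⟨rfl, rfl⟩ | ⟨rfl, rfl⟩
    · rcases eq_or_ne i j with rfl | hij
      · simp [hself]
      · simp [hij, hdirect]
    · rcases eq_or_ne i j with rfl | hij
      · simp [hself]
      · simp [hij, hexchange]
  · rw [apply_eq_zero_of_commute_kronecker_self hM h]
    grind

end Commutant

lemma natCast_sq_sub_one_ne_zero {N : ℕ} (hN : 1 < N) : (N : ℂ) ^ 2 - 1 ≠ 0 := by
  rw [sub_ne_zero]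
  exact_mod_cast (Nat.one_lt_pow two_ne_zero hN).ne'

section Twirl

open scoped Matrix.Norms.L2Operator

variable {n : Type*} [Fintype n] [DecidableEq n]

instance instCompactSpaceUnitaryGroup : CompactSpace (unitaryGroup n ℂ) := by
  have : ProperSpace (Matrix n n ℂ) := FiniteDimensional.proper ℂ _
  refine isCompact_iff_compactSpace.mp (Metric.isCompact_of_isClosed_isBounded isClosed_unitary ?_)
  refine isBounded_iff_forall_norm_le.mpr ⟨1, fun U hU => ?_⟩
  rcases subsingleton_or_nontrivial (Matrix n n ℂ) with _ | _
  · simp [Subsingleton.elim U 0]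
  · exact (CStarRing.norm_of_mem_unitary hU).le

variable [MeasurableSpace (unitaryGroup n ℂ)]

/-- The average of the conjugates of an operator `X` on a tensor square by `U ⊗ U`, over unitary
matrices `U` distributed according to `μ`. -/
noncomputable def twirl (μ : Measure (unitaryGroup n ℂ)) (X : Matrix (n × n) (n × n) ℂ) :
    Matrix (n × n) (n × n) ℂ :=
  ∫ U, (U.1 ⊗ₖ U.1) * X * star (U.1 ⊗ₖ U.1) ∂μ

variable [BorelSpace (unitaryGroup n ℂ)] (μ : Measure (unitaryGroup n ℂ))

lemma integrable_kronecker_self_conj [IsFiniteMeasure μ] (X : Matrix (n × n) (n × n) ℂ) :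
    Integrable (fun U => (U.1 ⊗ₖ U.1) * X * star (U.1 ⊗ₖ U.1)) μ := by
  have hU : Continuous fun U : unitaryGroup n ℂ => U.1 ⊗ₖ U.1 := by
    refine continuous_matrix fun i j => ?_
    exact (continuous_subtype_val.matrix_elem _ _).mul (continuous_subtype_val.matrix_elem _ _)
  exact ((hU.mul continuous_const).mul hU.star).integrable_of_hasCompactSupport
    (.of_compactSpace _)

lemma integrable_trace_mul_kronecker_self_conj [IsFiniteMeasure μ]
    (S X : Matrix (n × n) (n × n) ℂ) :
    Integrable (fun U => (S * ((U.1 ⊗ₖ U.1) * X * star (U.1 ⊗ₖ U.1))).trace) μ :=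
  (LinearMap.toContinuousLinearMap
    (traceLinearMap (n × n) ℂ ℂ ∘ₗ LinearMap.mulLeft ℂ S)).integrable_comp
      (integrable_kronecker_self_conj μ X)

lemma trace_mul_twirl [IsFiniteMeasure μ] (S X : Matrix (n × n) (n × n) ℂ) :
    (S * twirl μ X).trace = ∫ U, (S * ((U.1 ⊗ₖ U.1) * X * star (U.1 ⊗ₖ U.1))).trace ∂μ :=
  ((LinearMap.toContinuousLinearMap
    (traceLinearMap (n × n) ℂ ℂ ∘ₗ LinearMap.mulLeft ℂ S)).integral_comp_comm
      (integrable_kronecker_self_conj μ X)).symm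

lemma commute_twirl [IsFiniteMeasure μ] [μ.IsMulLeftInvariant] (X : Matrix (n × n) (n × n) ℂ)
    {V : Matrix n n ℂ} (hV : V ∈ unitaryGroup n ℂ) : Commute (V ⊗ₖ V) (twirl μ X) := by
  have hVV := kronecker_mem_unitary hV hV
  have hconj : (V ⊗ₖ V) * twirl μ X * star (V ⊗ₖ V) = twirl μ X := by
    rw [twirl, ← integral_const_mul_of_integrable (integrable_kronecker_self_conj μ X),
      ← integral_mul_const_of_integrable ((integrable_kronecker_self_conj μ X).const_mul _),
      ← integral_mul_left_eq_self (fun U : unitaryGroup n ℂ => _ * X * _) ⟨V, hV⟩]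
    simp [mul_kronecker_mul, mul_assoc]
  calc (V ⊗ₖ V) * twirl μ X
      = (V ⊗ₖ V) * twirl μ X * star (V ⊗ₖ V) * (V ⊗ₖ V) := by
        rw [mul_assoc _ (star _), mem_unitaryGroup_iff'.mp hVV, mul_one]
    _ = twirl μ X * (V ⊗ₖ V) := by rw [hconj]

lemma trace_mul_twirl_of_commute [IsProbabilityMeasure μ] {S : Matrix (n × n) (n × n) ℂ}
    (hS : ∀ V ∈ unitaryGroup n ℂ, Commute (V ⊗ₖ V) S) (X : Matrix (n × n) (n × n) ℂ) :
    (S * twirl μ X).trace = (S * X).trace := by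
  have hconj (U : unitaryGroup n ℂ) :
      (S * ((U.1 ⊗ₖ U.1) * X * star (U.1 ⊗ₖ U.1))).trace = (S * X).trace := by
    have hUU := kronecker_mem_unitary U.2 U.2
    rw [← mul_assoc, ← mul_assoc, ← (hS U U.2).eq, mul_assoc (_ ⊗ₖ _), trace_mul_cycle,
      mem_unitaryGroup_iff'.mp hUU, one_mul]
  simp [trace_mul_twirl, hconj]

lemma twirl_eq [Nontrivial n] [μ.IsMulLeftInvariant] [IsProbabilityMeasure μ]
    (X : Matrix (n × n) (n × n) ℂ) :
    twirl μ X =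
      ((Fintype.card n * X.trace - (swapMatrix n ℂ * X).trace) /
        (Fintype.card n * ((Fintype.card n : ℂ) ^ 2 - 1))) • 1 +
      ((Fintype.card n * (swapMatrix n ℂ * X).trace - X.trace) /
        (Fintype.card n * ((Fintype.card n : ℂ) ^ 2 - 1))) • swapMatrix n ℂ := by
  obtain ⟨α, β, h⟩ := exists_eq_smul_one_add_smul_swapMatrix_of_commute
    (fun V hV => commute_twirl μ X hV)
  have htrace : α * (Fintype.card n : ℂ) ^ 2 + β * Fintype.card n = X.trace := by
    simpa [h, trace_swapMatrix, sq] using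
      trace_mul_twirl_of_commute μ (S := 1) (fun V _ => Commute.one_right _) X
  have hswap : α * Fintype.card n + β * (Fintype.card n : ℂ) ^ 2 =
      (swapMatrix n ℂ * X).trace := by
    simpa [h, mul_add, swapMatrix_mul_self, trace_swapMatrix, sq] using
      trace_mul_twirl_of_commute μ (fun V _ => commute_kronecker_self_swapMatrix V) X
  have hdet : (Fintype.card n : ℂ) * ((Fintype.card n : ℂ) ^ 2 - 1) ≠ 0 :=
    mul_ne_zero (by simp) (natCast_sq_sub_one_ne_zero Fintype.one_lt_card)
  rw [h]
  congr 2
  · rw [eq_div_iff hdet]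
    linear_combination Fintype.card n * htrace - hswap
  · rw [eq_div_iff hdet]
    linear_combination Fintype.card n * hswap - htrace

end Twirl

section PartialTrace

variable {m n R : Type*} [Fintype n]

/-- The partial trace over the second tensor factor. -/
def traceSnd [AddCommMonoid R] (M : Matrix (m × n) (m × n) R) : Matrix m m R :=
  of fun i j => ∑ a, M (i, a) (j, a)

lemma traceSnd_kronecker_one [DecidableEq n] [NonAssocSemiring R] (A : Matrix m m R) :
    traceSnd (A ⊗ₖ (1 : Matrix n n R)) = (Fintype.card n : R) • A := by
  ext i j
  simp [traceSnd, Nat.cast_comm]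

variable [Fintype m] [DecidableEq n]

lemma trace_mul_kronecker_one [NonAssocSemiring R] (M : Matrix (m × n) (m × n) R)
    (A : Matrix m m R) : (M * (A ⊗ₖ (1 : Matrix n n R))).trace = (traceSnd M * A).trace := by
  simp only [trace, diag, mul_apply, traceSnd, of_apply, kroneckerMap_apply, one_apply, mul_ite,
    mul_one, mul_zero, Fintype.sum_prod_type, Finset.sum_ite_eq', Finset.mem_univ, if_true,
    Finset.sum_mul]
  exact Fintype.sum_congr _ _ fun _ => Finset.sum_comm

lemma trace_sub_traceSnd_kronecker_mul_self [Field R] (M : Matrix (m × n) (m × n) R) :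
    ((M - traceSnd M ⊗ₖ ((Fintype.card n : R)⁻¹ • 1)) *
        (M - traceSnd M ⊗ₖ ((Fintype.card n : R)⁻¹ • 1))).trace =
      (M * M).trace - (Fintype.card n : R)⁻¹ * (traceSnd M * traceSnd M).trace := by
  rw [kronecker_smul]
  set d : R := (Fintype.card n : R)
  set T := traceSnd M ⊗ₖ (1 : Matrix n n R)
  have hMT : (M * T).trace = (traceSnd M * traceSnd M).trace := trace_mul_kronecker_one _ _
  have hTT : (T * T).trace = d * (traceSnd M * traceSnd M).trace := by
    simp [T, d, trace_mul_kronecker_one, traceSnd_kronecker_one]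
  have hd : d⁻¹ * d * d⁻¹ = d⁻¹ := by simpa only [inv_inv] using mul_inv_mul_cancel d⁻¹
  simp only [sub_mul, mul_sub, trace_sub, mul_smul_comm, smul_mul_assoc, trace_smul, smul_eq_mul,
    trace_mul_comm T M, hMT, hTT]
  linear_combination (traceSnd M * traceSnd M).trace * hd

end PartialTrace

section Decoupling

variable {C A₁ A₂ A R : Type*}

/-- The partial trace over the middle one of three tensor factors. -/
def traceMiddle [Fintype A₁] [AddCommMonoid R] (M : Matrix (C × (A₁ × A₂)) (C × (A₁ × A₂)) R) :
    Matrix (C × A₂) (C × A₂) R :=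
  of fun p q => ∑ a, M (p.1, (a, p.2)) (q.1, (a, q.2))

/-- The block of `M` between the basis vectors `x` and `y` of the first tensor factor, an operator
on the second one. -/
def block (M : Matrix (C × A) (C × A) R) (x y : C) : Matrix A A R :=
  M.submatrix (Prod.mk x) (Prod.mk y)

/-- The partial trace over both copies of `R^C` of `(M ⊗ M) F`, where `F` exchanges these copies.
Its traces against swap operators are the purities of `M` and of the reductions of `M`. -/
def contractFst [Fintype C] [CommSemiring R] (M : Matrix (C × A) (C × A) R) :
    Matrix (A × A) (A × A) R :=
  ∑ c, ∑ c', block M c c' ⊗ₖ block M c' c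

lemma traceSnd_traceMiddle [Fintype A₁] [Fintype A₂] [AddCommMonoid R]
    (M : Matrix (C × (A₁ × A₂)) (C × (A₁ × A₂)) R) : traceSnd (traceMiddle M) = traceSnd M := by
  ext c c'
  simp [traceSnd, traceMiddle, Fintype.sum_prod_type_right]

variable [Fintype C] [Fintype A]

lemma trace_mul_eq_sum_block [NonUnitalNonAssocSemiring R] (M N : Matrix (C × A) (C × A) R) :
    (M * N).trace = ∑ c, ∑ c', (block M c c' * block N c' c).trace := by
  simp only [trace, diag, mul_apply, block, submatrix_apply, Fintype.sum_prod_type]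
  exact Fintype.sum_congr _ _ fun _ => Finset.sum_comm

lemma trace_contractFst [CommSemiring R] (M : Matrix (C × A) (C × A) R) :
    (contractFst M).trace = (traceSnd M * traceSnd M).trace := by
  simp only [contractFst, trace_sum, trace_kronecker]
  rfl

lemma trace_swapMatrix_mul_contractFst [CommSemiring R] [DecidableEq A]
    (M : Matrix (C × A) (C × A) R) :
    (swapMatrix A R * contractFst M).trace = (M * M).trace := by
  simp only [contractFst, Matrix.mul_sum, trace_sum, trace_swapMatrix_mul_kronecker,
    trace_mul_eq_sum_block M M]

variable [Fintype A₁] [Fintype A₂] [DecidableEq A₁] [DecidableEq A₂]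

lemma trace_swapSndMatrix_mul_contractFst [CommSemiring R]
    (M : Matrix (C × (A₁ × A₂)) (C × (A₁ × A₂)) R) :
    (swapSndMatrix A₁ A₂ R * contractFst M).trace = (traceMiddle M * traceMiddle M).trace := by
  simp only [contractFst, Matrix.mul_sum, trace_sum, trace_swapSndMatrix_mul_kronecker,
    trace_mul_eq_sum_block (traceMiddle M) (traceMiddle M)]
  rfl

variable [DecidableEq C]

lemma block_one_kronecker_conj [CommSemiring R] [StarRing R] (M : Matrix (C × A) (C × A) R)
    (U : Matrix A A R) (c c' : C) :
    block ((1 ⊗ₖ U) * M * (1 ⊗ₖ U)ᴴ) c c' = U * block M c c' * Uᴴ := by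
  ext i j
  simp [block, mul_apply, one_apply, Fintype.sum_prod_type, apply_ite]

lemma contractFst_one_kronecker_conj [CommSemiring R] [StarRing R] (M : Matrix (C × A) (C × A) R)
    (U : Matrix A A R) :
    contractFst ((1 ⊗ₖ U) * M * (1 ⊗ₖ U)ᴴ) = (U ⊗ₖ U) * contractFst M * star (U ⊗ₖ U) := by
  simp only [contractFst, block_one_kronecker_conj]
  simp only [star_eq_conjTranspose, conjTranspose_kronecker, mul_kronecker_mul, Matrix.mul_sum,
    Matrix.sum_mul]

lemma traceSnd_one_kronecker_conj [CommRing R] [StarRing R] [DecidableEq A]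
    (M : Matrix (C × A) (C × A) R) {U : Matrix A A R} (hU : U ∈ unitaryGroup A R) :
    traceSnd ((1 ⊗ₖ U) * M * (1 ⊗ₖ U)ᴴ) = traceSnd M := by
  ext c c'
  change (block _ c c').trace = (block M c c').trace
  rw [block_one_kronecker_conj, trace_mul_cycle, ← star_eq_conjTranspose,
    mem_unitaryGroup_iff'.mp hU, one_mul]

lemma trace_traceMiddle_conj_sub_mul_self [Field R] [StarRing R]
    (M : Matrix (C × (A₁ × A₂)) (C × (A₁ × A₂)) R) {U : Matrix (A₁ × A₂) (A₁ × A₂) R}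
    (hU : U ∈ unitaryGroup (A₁ × A₂) R) :
    ((traceMiddle ((1 ⊗ₖ U) * M * (1 ⊗ₖ U)ᴴ) -
          traceSnd M ⊗ₖ ((Fintype.card A₂ : R)⁻¹ • 1)) *
        (traceMiddle ((1 ⊗ₖ U) * M * (1 ⊗ₖ U)ᴴ) -
          traceSnd M ⊗ₖ ((Fintype.card A₂ : R)⁻¹ • 1))).trace =
      (swapSndMatrix A₁ A₂ R * ((U ⊗ₖ U) * contractFst M * star (U ⊗ₖ U))).trace -
        (Fintype.card A₂ : R)⁻¹ * (traceSnd M * traceSnd M).trace := by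
  rw [← contractFst_one_kronecker_conj, trace_swapSndMatrix_mul_contractFst,
    ← traceSnd_one_kronecker_conj M hU, ← traceSnd_traceMiddle,
    trace_sub_traceSnd_kronecker_mul_self]

lemma trace_swapSndMatrix_mul_twirl [Nontrivial (A₁ × A₂)]
    [MeasurableSpace (unitaryGroup (A₁ × A₂) ℂ)] [BorelSpace (unitaryGroup (A₁ × A₂) ℂ)]
    (μ : Measure (unitaryGroup (A₁ × A₂) ℂ)) [μ.IsMulLeftInvariant] [IsProbabilityMeasure μ]
    (X : Matrix ((A₁ × A₂) × (A₁ × A₂)) ((A₁ × A₂) × (A₁ × A₂)) ℂ) :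
    (swapSndMatrix A₁ A₂ ℂ * twirl μ X).trace =
      (Fintype.card A₂ * ((Fintype.card A₁ : ℂ) ^ 2 - 1) * X.trace +
        Fintype.card A₁ * ((Fintype.card A₂ : ℂ) ^ 2 - 1) *
          (swapMatrix (A₁ × A₂) ℂ * X).trace) /
        ((Fintype.card A₁ * Fintype.card A₂ : ℂ) ^ 2 - 1) := by
  have hdet := natCast_sq_sub_one_ne_zero (Fintype.one_lt_card (α := A₁ × A₂))
  have hcard : (Fintype.card (A₁ × A₂) : ℂ) ≠ 0 := Nat.cast_ne_zero.mpr Fintype.card_ne_zero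
  rw [twirl_eq, mul_add, trace_add, mul_smul_comm, mul_smul_comm, trace_smul, trace_smul, mul_one,
    trace_swapSndMatrix, trace_swapSndMatrix_mul_swapMatrix]
  simp only [Fintype.card_prod, Nat.cast_mul, smul_eq_mul] at hdet hcard ⊢
  obtain ⟨h₁, h₂⟩ := mul_ne_zero_iff.mp hcard
  field_simp
  ring

end Decoupling

theorem stmt9_general {C A₁ A₂ : Type*} [Fintype C] [Fintype A₁] [Fintype A₂]
    [DecidableEq C] [DecidableEq A₁] [DecidableEq A₂] [Nontrivial (A₁ × A₂)]
    (ψ : Matrix (C × (A₁ × A₂)) (C × (A₁ × A₂)) ℂ)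
    [MeasurableSpace (unitaryGroup (A₁ × A₂) ℂ)] [BorelSpace (unitaryGroup (A₁ × A₂) ℂ)]
    (μ : Measure (unitaryGroup (A₁ × A₂) ℂ)) [μ.IsMulLeftInvariant] [IsProbabilityMeasure μ] :
    ∫ U, ((traceMiddle ((1 ⊗ₖ U.1) * ψ * (1 ⊗ₖ U.1)ᴴ) -
            traceSnd ψ ⊗ₖ ((Fintype.card A₂ : ℂ)⁻¹ • 1)) *
          (traceMiddle ((1 ⊗ₖ U.1) * ψ * (1 ⊗ₖ U.1)ᴴ) -
            traceSnd ψ ⊗ₖ ((Fintype.card A₂ : ℂ)⁻¹ • 1))).trace ∂μ =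
      ((Fintype.card A₂ : ℂ) ^ 2 - 1) *
          ((Fintype.card A₁ * Fintype.card A₂ : ℂ) * (ψ * ψ).trace -
            (traceSnd ψ * traceSnd ψ).trace) /
        (Fintype.card A₂ * ((Fintype.card A₁ * Fintype.card A₂ : ℂ) ^ 2 - 1)) := by
  have hdet := natCast_sq_sub_one_ne_zero (Fintype.one_lt_card (α := A₁ × A₂))
  have : Nonempty A₂ := (Nontrivial.to_nonempty (α := A₁ × A₂)).map Prod.snd
  have hcard : (Fintype.card A₂ : ℂ) ≠ 0 := Nat.cast_ne_zero.mpr Fintype.card_ne_zero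
  simp_rw [fun U : unitaryGroup (A₁ × A₂) ℂ => trace_traceMiddle_conj_sub_mul_self ψ U.2]
  rw [integral_sub (integrable_trace_mul_kronecker_self_conj μ _ _) (integrable_const _),
    ← trace_mul_twirl, trace_swapSndMatrix_mul_twirl, trace_contractFst,
    trace_swapMatrix_mul_contractFst, integral_const, probReal_univ, one_smul]
  rw [Fintype.card_prod, Nat.cast_mul] at hdet
  rw [inv_mul_eq_div, div_sub_div _ _ hdet hcard,
    div_eq_div_iff (mul_ne_zero hdet hcard) (mul_ne_zero hcard hdet)]
  ring

/-- The quantum instance of the paper's decoupling Corollary in 2-norm: the Haar-averaged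
squared Hilbert–Schmidt distance of `σ(U)^{CA₂}` from the decoupled state `ψ_C ⊗ 1/d₂`. -/
theorem stmt9 (dC d₁ d₂ : ℕ) (hdC : 1 ≤ dC) (hd₁ : 1 ≤ d₁) (hd₂ : 1 ≤ d₂)
    (hd : 2 ≤ d₁ * d₂)
    (ψ : Matrix (Fin dC × (Fin d₁ × Fin d₂)) (Fin dC × (Fin d₁ × Fin d₂)) ℂ)
    (hψ : ψ.PosSemidef) (htr : ψ.trace = 1)
    [MeasurableSpace (Matrix.unitaryGroup (Fin d₁ × Fin d₂) ℂ)]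
    [BorelSpace (Matrix.unitaryGroup (Fin d₁ × Fin d₂) ℂ)]
    (μ : Measure (Matrix.unitaryGroup (Fin d₁ × Fin d₂) ℂ))
    [μ.IsHaarMeasure] [IsProbabilityMeasure μ] :
    ∫ U, ((sigmaCA2 ψ U - ptraceC ψ ⊗ₖ ((d₂ : ℂ)⁻¹ • (1 : Matrix (Fin d₂) (Fin d₂) ℂ))) *
          (sigmaCA2 ψ U - ptraceC ψ ⊗ₖ ((d₂ : ℂ)⁻¹ • (1 : Matrix (Fin d₂) (Fin d₂) ℂ)))).trace ∂μ
      = ((d₂ : ℂ) ^ 2 - 1) *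
            ((d₁ * d₂ : ℂ) * (ψ * ψ).trace - (ptraceC ψ * ptraceC ψ).trace)
          / ((d₂ : ℂ) * ((d₁ * d₂ : ℂ) ^ 2 - 1)) := by
  have : Nontrivial (Fin d₁ × Fin d₂) := Fintype.one_lt_card_iff_nontrivial.mp (by simpa using! hd)
  simpa only [Fintype.card_fin] using! stmt9_general ψ μ
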